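/- arXiv:1512.07382 — 2 statements merged into one kernel-verified Lean document; each statement's English description precedes it below -/
import Mathlib

section
/- Let η be a free ultrafilter on ℕ, t ∈ [0,1), θ = 2^t, and let 𝒰 be the image ultrafilter of η under the map n ↦ ⌊θ·2^n⌋. Then the following are equivalent: (i) the density measure ν_{(η,t)} has the additive property and 𝒰 contains an infinite set X ⊆ ℕ whose increasing enumeration m_1 < m_2 < ⋯ satisfies m_{k+1}/m_k → ∞; (ii) η contains a thin set. -/
open Filter Topology

noncomputable section

/-- The density measure `ν_{(η,t)}(A) = η-lim_n |A ∩ [1,⌊2^t·2^n⌋]| / (2^t·2^n)`. -/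
def nuDen (η : Ultrafilter ℕ) (t : ℝ) (A : Set ℕ) : ℝ :=
  limUnder (η : Filter ℕ)
    (fun n : ℕ =>
      (Nat.card (A ∩ Set.Icc 1 ⌊(2:ℝ) ^ t * 2 ^ n⌋₊ : Set ℕ) : ℝ) / ((2:ℝ) ^ t * 2 ^ n))

/-- A set function `ν` on `𝒫(ℕ)` has the additive property if for every increasing
sequence `A₁ ⊆ A₂ ⊆ ⋯` there is `B ⊆ ℕ` with `ν(B) = lim_i ν(A_i)` and
`ν(A_i \ B) = 0` for all `i`. -/
def AddProp (ν : Set ℕ → ℝ) : Prop :=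
  ∀ A : ℕ → Set ℕ, (∀ i, A i ⊆ A (i + 1)) →
    ∃ B : Set ℕ, Tendsto (fun i => ν (A i)) atTop (𝓝 (ν B)) ∧ ∀ i, ν (A i \ B) = 0

/-- `A ⊆ ℕ` is thin if `A ∩ (A + m)` is finite for every `m ≥ 1`. -/
def ThinSet (A : Set ℕ) : Prop :=
  ∀ m : ℕ, 1 ≤ m → (A ∩ ((fun x => x + m) '' A)).Finite

/-!
Counting up to `x`, two sets that agree on `(y, x]` have densities differing by at most `y / x`.

If `A ∈ η` is thin and `p n` is the last element of `A` before `n`, then `n - p n → ∞` along `η`.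
So the windows `(θ 2^(p n), θ 2^n]`, `n ∈ A`, are disjoint and each carries asymptotically all the
mass seen at stage `n`. Given `C₀ ⊆ C₁ ⊆ ⋯`, choose `g n → ∞` slowly enough that the density of
`C (g n)` at stage `n` tends to `lim ν(Cᵢ)`, and let `B` be `C (g n)` on the `n`-th window.

The passage between thin sets and superlacunary sets is `⌊θ 2^(m+d)⌋ ≍ 2^d ⌊θ 2^m⌋`: a difference
of indices tends to infinity exactly when the corresponding ratio of values does.
-/

section DensityUpTo

/-- The proportion `|S ∩ [1, ⌊x⌋]| / x` of `S` up to `x`, whose ultralimits are the density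
measures. It is `0` for `x ≤ 0`. -/
def densityUpTo (S : Set ℕ) (x : ℝ) : ℝ :=
  (Nat.card (S ∩ Set.Icc 1 ⌊x⌋₊ : Set ℕ) : ℝ) / x

lemma card_inter_Icc_le_add {S T : Set ℕ} {M N : ℕ}
    (h : ∀ k ∈ S, M < k → k ≤ N → k ∈ T) :
    Nat.card (S ∩ Set.Icc 1 N : Set ℕ) ≤ Nat.card (T ∩ Set.Icc 1 N : Set ℕ) + M := by
  have hsub : S ∩ Set.Icc 1 N ⊆ (T ∩ Set.Icc 1 N) ∪ Set.Icc 1 M := by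
    rintro k ⟨hkS, h1k, hkN⟩
    rcases le_or_gt k M with hkM | hMk
    · exact Or.inr ⟨h1k, hkM⟩
    · exact Or.inl ⟨h k hkS hMk hkN, h1k, hkN⟩
  have hfin : ((T ∩ Set.Icc 1 N) ∪ Set.Icc 1 M).Finite :=
    ((Set.finite_Icc 1 N).inter_of_right T).union (Set.finite_Icc 1 M)
  simp only [Nat.card_coe_set_eq]
  calc (S ∩ Set.Icc 1 N).ncard
      ≤ (T ∩ Set.Icc 1 N).ncard + (Set.Icc 1 M).ncard :=
        (Set.ncard_le_ncard hsub hfin).trans (Set.ncard_union_le _ _)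
    _ = (T ∩ Set.Icc 1 N).ncard + M := by simp [Set.ncard_eq_toFinset_card']

@[simp]
lemma densityUpTo_empty (x : ℝ) : densityUpTo ∅ x = 0 := by
  simp [densityUpTo]

lemma densityUpTo_of_nonpos (S : Set ℕ) {x : ℝ} (hx : x ≤ 0) : densityUpTo S x = 0 := by
  simp [densityUpTo, Nat.floor_of_nonpos hx]

lemma densityUpTo_le_add {S T : Set ℕ} {x y : ℝ} (hx : 0 ≤ x) (hy : 0 ≤ y)
    (h : ∀ k : ℕ, (k : ℝ) ∈ Set.Ioc y x → k ∈ S → k ∈ T) :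
    densityUpTo S x ≤ densityUpTo T x + y / x := by
  have hcard : Nat.card (S ∩ Set.Icc 1 ⌊x⌋₊ : Set ℕ) ≤
      Nat.card (T ∩ Set.Icc 1 ⌊x⌋₊ : Set ℕ) + ⌊y⌋₊ :=
    card_inter_Icc_le_add fun k hkS hyk hkx ↦
      h k ⟨(Nat.floor_lt hy).1 hyk, (Nat.le_floor_iff hx).1 hkx⟩ hkS
  have hcast : (Nat.card (S ∩ Set.Icc 1 ⌊x⌋₊ : Set ℕ) : ℝ) ≤
      Nat.card (T ∩ Set.Icc 1 ⌊x⌋₊ : Set ℕ) + ⌊y⌋₊ := mod_cast hcard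
  rw [densityUpTo, densityUpTo, ← add_div]
  gcongr
  exact hcast.trans (by gcongr; exact Nat.floor_le hy)

lemma abs_densityUpTo_sub_le {S T : Set ℕ} {x y : ℝ} (hx : 0 ≤ x) (hy : 0 ≤ y)
    (h : ∀ k : ℕ, (k : ℝ) ∈ Set.Ioc y x → (k ∈ S ↔ k ∈ T)) :
    |densityUpTo S x - densityUpTo T x| ≤ y / x :=
  abs_sub_le_iff.2
    ⟨sub_le_iff_le_add'.2 (densityUpTo_le_add hx hy fun k hk ↦ (h k hk).1),
      sub_le_iff_le_add'.2 (densityUpTo_le_add hx hy fun k hk ↦ (h k hk).2)⟩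

lemma densityUpTo_mono {S T : Set ℕ} (h : S ⊆ T) (x : ℝ) : densityUpTo S x ≤ densityUpTo T x := by
  rcases le_total x 0 with hx | hx
  · rw [densityUpTo_of_nonpos S hx, densityUpTo_of_nonpos T hx]
  · simpa using densityUpTo_le_add hx le_rfl fun k _ hk ↦ h hk

lemma densityUpTo_mem_Icc (S : Set ℕ) (x : ℝ) : densityUpTo S x ∈ Set.Icc 0 1 := by
  refine ⟨by simpa using densityUpTo_mono (Set.empty_subset S) x, ?_⟩
  rcases le_total x 0 with hx | hx
  · rw [densityUpTo_of_nonpos S hx]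
    exact zero_le_one
  · calc densityUpTo S x ≤ densityUpTo ∅ x + x / x :=
          densityUpTo_le_add hx hx fun k hk ↦ absurd hk.2 (not_le.2 hk.1)
      _ ≤ 1 := by simpa using div_self_le_one x

lemma tendsto_densityUpTo_sub_of_agree {ι : Type*} {l : Filter ι} {x y : ι → ℝ} {S T : ι → Set ℕ}
    (hx : Tendsto x l atTop) (hy : ∀ i, 0 ≤ y i) (hyx : Tendsto (fun i ↦ y i / x i) l (𝓝 0))
    (h : ∀ᶠ i in l, ∀ k : ℕ, (k : ℝ) ∈ Set.Ioc (y i) (x i) → (k ∈ S i ↔ k ∈ T i)) :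
    Tendsto (fun i ↦ densityUpTo (S i) (x i) - densityUpTo (T i) (x i)) l (𝓝 0) := by
  refine squeeze_zero_norm' ?_ hyx
  filter_upwards [h, hx.eventually_ge_atTop 0] with i hi hxi
  exact abs_densityUpTo_sub_le hxi (hy i) hi

end DensityUpTo

section DensityAlong

variable {ι : Type*}

/-- The density measure `S ↦ η-lim_i |S ∩ [1, ⌊x i⌋]| / x i` obtained from an arbitrary family of
scales `x`; `nuDen η t` is the case `x n = 2 ^ t * 2 ^ n`. -/
def densityAlong (η : Ultrafilter ι) (x : ι → ℝ) (S : Set ℕ) : ℝ :=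
  limUnder (η : Filter ι) fun i ↦ densityUpTo S (x i)

/-- The set made of the part of `C i` in the window `(y i, x i]` for each `i ∈ A`; it serves as the
set `B` of the additive property. -/
def windowPatch (A : Set ι) (x y : ι → ℝ) (C : ι → Set ℕ) : Set ℕ :=
  {k | ∃ i ∈ A, (k : ℝ) ∈ Set.Ioc (y i) (x i) ∧ k ∈ C i}

lemma mem_windowPatch_iff {A : Set ι} {x y : ι → ℝ}
    (hA : A.PairwiseDisjoint fun i ↦ Set.Ioc (y i) (x i)) {C : ι → Set ℕ} {i : ι} (hi : i ∈ A)
    {k : ℕ} (hk : (k : ℝ) ∈ Set.Ioc (y i) (x i)) :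
    k ∈ windowPatch A x y C ↔ k ∈ C i := by
  constructor
  · rintro ⟨j, hj, hkj, hkC⟩
    rwa [hA.elim_set hi hj k hk hkj]
  · exact fun hkC ↦ ⟨i, hi, hk, hkC⟩

lemma tendsto_densityUpTo_densityAlong (η : Ultrafilter ι) (x : ι → ℝ) (S : Set ℕ) :
    Tendsto (fun i ↦ densityUpTo S (x i)) η (𝓝 (densityAlong η x S)) := by
  obtain ⟨a, -, ha⟩ := isCompact_Icc.ultrafilter_le_nhds (η.map fun i ↦ densityUpTo S (x i))
    (tendsto_principal.2 (.of_forall fun i ↦ densityUpTo_mem_Icc S (x i)))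
  exact tendsto_nhds_limUnder ⟨a, ha⟩

lemma densityAlong_mono (η : Ultrafilter ι) (x : ι → ℝ) : Monotone (densityAlong η x) :=
  fun S T hST ↦ le_of_tendsto_of_tendsto' (tendsto_densityUpTo_densityAlong η x S)
    (tendsto_densityUpTo_densityAlong η x T) fun i ↦ densityUpTo_mono hST (x i)

lemma densityAlong_le_one (η : Ultrafilter ι) (x : ι → ℝ) (S : Set ℕ) : densityAlong η x S ≤ 1 :=
  le_of_tendsto' (tendsto_densityUpTo_densityAlong η x S) fun i ↦ (densityUpTo_mem_Icc S (x i)).2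

lemma exists_tendsto_diagonal {X : Type*} [PseudoMetricSpace X] {l : Filter ι} {f : ι → ℕ}
    (hf : Tendsto f l atTop) {D : ℕ → ι → X} {a : ℕ → X} {b : X}
    (hD : ∀ j, Tendsto (D j) l (𝓝 (a j))) (ha : Tendsto a atTop (𝓝 b)) :
    ∃ g : ι → ℕ, Tendsto g l atTop ∧ Tendsto (fun i ↦ D (g i) i) l (𝓝 b) := by
  classical
  let P : ι → ℕ → Prop := fun i j ↦ dist (D j i) (a j) < 1 / ((j : ℝ) + 1)
  let g : ι → ℕ := fun i ↦ Nat.findGreatest (P i) (f i)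
  have hg : Tendsto g l atTop := by
    refine tendsto_atTop.2 fun j ↦ ?_
    filter_upwards [Metric.tendsto_nhds.1 (hD j) (1 / ((j : ℝ) + 1)) (by positivity),
      hf.eventually_ge_atTop j] with i hP hji
    exact Nat.le_findGreatest hji hP
  have hdist : Tendsto (fun i ↦ dist (a (g i)) (D (g i) i)) l (𝓝 0) := by
    refine squeeze_zero' (.of_forall fun i ↦ dist_nonneg) ?_
      (tendsto_one_div_add_atTop_nhds_zero_nat.comp hg)
    filter_upwards [hg.eventually_ge_atTop 1] with i hi
    have hP : P i (g i) := Nat.findGreatest_of_ne_zero rfl (Nat.one_le_iff_ne_zero.1 hi)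
    rw [dist_comm]
    exact hP.le
  exact ⟨g, hg, tendsto_of_tendsto_of_dist (ha.comp hg) hdist⟩

theorem addProp_densityAlong_of_pairwiseDisjoint {η : Ultrafilter ι} {x y : ι → ℝ} {A : Set ι}
    (hAη : A ∈ η) (hA : A.PairwiseDisjoint fun i ↦ Set.Ioc (y i) (x i)) (hx : Tendsto x η atTop)
    (hy : ∀ i, 0 ≤ y i) (hyx : Tendsto (fun i ↦ y i / x i) η (𝓝 0)) :
    AddProp (densityAlong η x) := by
  intro C hC
  have hCmono : Monotone C := monotone_nat_of_le_succ hC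
  have hν := tendsto_densityUpTo_densityAlong η x
  have hsup : Tendsto (fun j ↦ densityAlong η x (C j)) atTop (𝓝 (⨆ j, densityAlong η x (C j))) :=
    tendsto_atTop_ciSup ((densityAlong_mono η x).comp hCmono)
      ⟨1, Set.forall_mem_range.2 fun j ↦ densityAlong_le_one η x (C j)⟩
  obtain ⟨g, hg, hgC⟩ := exists_tendsto_diagonal (tendsto_nat_floor_atTop.comp hx)
    (fun j ↦ hν (C j)) hsup
  let B := windowPatch A x y fun i ↦ C (g i)
  have hB : ∀ i ∈ A, ∀ k : ℕ, (k : ℝ) ∈ Set.Ioc (y i) (x i) → (k ∈ B ↔ k ∈ C (g i)) :=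
    fun i hi k hk ↦ mem_windowPatch_iff hA hi hk
  refine ⟨B, ?_, fun j ↦ ?_⟩
  · have hdiff := tendsto_densityUpTo_sub_of_agree (S := fun _ ↦ B) hx hy hyx
      (by filter_upwards [hAη] using hB)
    have hBlim := hdiff.add hgC
    simp only [sub_add_cancel, zero_add] at hBlim
    rwa [tendsto_nhds_unique (hν B) hBlim]
  · have hempty : ∀ᶠ i in (η : Filter ι), ∀ k : ℕ, (k : ℝ) ∈ Set.Ioc (y i) (x i) →
        (k ∈ C j \ B ↔ k ∈ (∅ : Set ℕ)) := by
      filter_upwards [hAη, hg.eventually_ge_atTop j] with i hi hji k hk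
      exact iff_of_false (fun hkCB ↦ hkCB.2 ((hB i hi k hk).2 (hCmono hji hkCB.1))) (by simp)
    have hdiff := tendsto_densityUpTo_sub_of_agree hx hy hyx hempty
    simp only [densityUpTo_empty, sub_zero] at hdiff
    exact tendsto_nhds_unique (hν (C j \ B)) hdiff

end DensityAlong

section ThinSet

lemma thinSet_iff_eventually_add_le {A : Set ℕ} :
    ThinSet A ↔ ∀ d, ∀ᶠ n in atTop, n ∈ A → ∀ m ∈ A, m < n → m + d ≤ n := by
  simp only [← Nat.cofinite_eq_atTop]
  constructor
  · intro hA d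
    have hfin : (⋃ k ∈ Set.Icc 1 d, A ∩ (fun x ↦ x + k) '' A).Finite :=
      (Set.finite_Icc 1 d).biUnion fun k hk ↦ hA k hk.1
    filter_upwards [hfin.compl_mem_cofinite] with n hn hnA m hmA hmn
    by_contra! hnd
    exact hn (Set.mem_biUnion (x := n - m) ⟨by omega, by omega⟩
      ⟨hnA, m, hmA, Nat.add_sub_cancel' hmn.le⟩)
  · intro hA d hd
    refine (hA (d + 1)).subset ?_
    rintro _ ⟨hnA, m, hmA, rfl⟩ hgap
    have hle : m + (d + 1) ≤ m + d := hgap hnA m hmA (Nat.lt_add_of_pos_right hd)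
    omega

/-- The last element of `A` before `n`, or `0` if there is none (the junk value of `sSup ∅`); the
`n`-th window of the patching construction starts at its scale. -/
def lastBefore (A : Set ℕ) (n : ℕ) : ℕ :=
  sSup (A ∩ Set.Iio n)

lemma le_lastBefore {A : Set ℕ} {m n : ℕ} (hm : m ∈ A) (hmn : m < n) : m ≤ lastBefore A n :=
  le_csSup ⟨n, fun _ hk ↦ hk.2.le⟩ ⟨hm, hmn⟩

lemma lastBefore_add_le {A : Set ℕ} {d n : ℕ} (hd : d ≤ n)
    (h : ∀ m ∈ A, m < n → m + d ≤ n) : lastBefore A n + d ≤ n :=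
  add_le_of_le_tsub_right_of_le hd
    (csSup_le' fun m hm ↦ Nat.le_sub_of_add_le (h m hm.1 hm.2))

lemma ThinSet.tendsto_sub_lastBefore {A : Set ℕ} (hA : ThinSet A) :
    Tendsto (fun n ↦ n - lastBefore A n) (atTop ⊓ 𝓟 A) atTop := by
  refine tendsto_atTop.2 fun d ↦ eventually_inf_principal.2 ?_
  filter_upwards [thinSet_iff_eventually_add_le.1 hA d, eventually_ge_atTop d] with n hgap hdn hnA
  have := lastBefore_add_le hdn (hgap hnA)
  omega

lemma pairwiseDisjoint_Ioc_lastBefore {x : ℕ → ℝ} (hx : Monotone x) (A : Set ℕ) :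
    A.PairwiseDisjoint fun n ↦ Set.Ioc (x (lastBefore A n)) (x n) := by
  have hlt : ∀ m ∈ A, ∀ n, m < n →
      Disjoint (Set.Ioc (x (lastBefore A m)) (x m)) (Set.Ioc (x (lastBefore A n)) (x n)) :=
    fun m hm n hmn ↦ Set.disjoint_left.2 fun _ hr hr' ↦
      (hr.2.trans (hx (le_lastBefore hm hmn))).not_gt hr'.1
  intro m hm n hn hmn
  rcases hmn.lt_or_gt with h | h
  · exact hlt m hm n h
  · exact (hlt n hn m h).symm

lemma monotone_mul_two_pow {θ : ℝ} (hθ : 0 ≤ θ) : Monotone fun n : ℕ ↦ θ * 2 ^ n :=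
  (pow_right_mono₀ one_le_two).const_mul hθ

lemma tendsto_mul_two_pow_atTop {θ : ℝ} (hθ : 0 < θ) :
    Tendsto (fun n : ℕ ↦ θ * 2 ^ n) atTop atTop :=
  (tendsto_pow_atTop_atTop_of_one_lt one_lt_two).const_mul_atTop hθ

theorem ThinSet.addProp_densityAlong {A : Set ℕ} (hA : ThinSet A) {η : Ultrafilter ℕ}
    (hη : (η : Filter ℕ) ≤ atTop) (hAη : A ∈ η) {θ : ℝ} (hθ : 0 < θ) :
    AddProp (densityAlong η fun n ↦ θ * 2 ^ n) := by
  have hratio (n : ℕ) : θ * 2 ^ lastBefore A n / (θ * 2 ^ n) = (1 / 2) ^ (n - lastBefore A n) := by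
    have hle : lastBefore A n ≤ n := lastBefore_add_le (Nat.zero_le n) fun _ _ hmn ↦ hmn.le
    rw [mul_div_mul_left _ _ hθ.ne', one_div_pow, one_div, ← inv_div, pow_sub₀ _ two_ne_zero hle,
      div_eq_mul_inv]
  refine addProp_densityAlong_of_pairwiseDisjoint hAη
    (pairwiseDisjoint_Ioc_lastBefore (monotone_mul_two_pow hθ.le) A)
    ((tendsto_mul_two_pow_atTop hθ).mono_left hη) (fun n ↦ by positivity) ?_
  simp only [hratio]
  exact (tendsto_pow_atTop_nhds_zero_of_lt_one (by norm_num) one_half_lt_one).comp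
    (hA.tendsto_sub_lastBefore.mono_left (le_inf hη (le_principal_iff.2 hAη)))

end ThinSet

section SuperLacunary

/-- Infinite sets whose increasing enumeration has consecutive ratios tending to infinity. -/
def SuperLacunary (X : Set ℕ) : Prop :=
  ∃ e : ℕ → ℕ, StrictMono e ∧ Set.range e = X ∧
    Tendsto (fun k ↦ (e (k + 1) : ℝ) / (e k : ℝ)) atTop atTop

lemma SuperLacunary.eventually_mul_le {X : Set ℕ} (hX : SuperLacunary X) (c : ℕ) :
    ∀ᶠ b in atTop, b ∈ X → ∀ a ∈ X, a < b → c * a ≤ b := by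
  obtain ⟨e, he, rfl, hlim⟩ := hX
  obtain ⟨K, hK⟩ := eventually_atTop.1 (hlim.eventually_ge_atTop (c : ℝ))
  filter_upwards [eventually_gt_atTop (e K)]
  rintro _ hKl ⟨l, rfl⟩ _ ⟨j, rfl⟩ hjl
  obtain ⟨l, rfl⟩ : ∃ i, l = i + 1 := Nat.exists_eq_add_one.2 (pos_of_gt (he.lt_iff_lt.1 hKl))
  have hratio : (c : ℝ) * e l ≤ e (l + 1) :=
    mul_le_of_le_div₀ (by positivity) (by positivity)
      (hK l (Nat.lt_add_one_iff.1 (he.lt_iff_lt.1 hKl)))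
  calc c * e j ≤ c * e l := by
        gcongr
        exact he.monotone (Nat.lt_add_one_iff.1 (he.lt_iff_lt.1 hjl))
    _ ≤ e (l + 1) := mod_cast hratio

lemma superLacunary_of_eventually_mul_le {X : Set ℕ} (hinf : X.Infinite)
    (hX : ∀ c : ℕ, ∀ᶠ b in atTop, b ∈ X → ∀ a ∈ X, a < b → c * a ≤ b) : SuperLacunary X := by
  classical
  have := hinf.to_subtype
  let e := Nat.orderEmbeddingOfSet X
  have hrange : Set.range e = X := Nat.orderEmbeddingOfSet_range X
  have heX (k : ℕ) : e k ∈ X := hrange ▸ Set.mem_range_self k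
  refine ⟨e, e.strictMono, hrange, tendsto_atTop.2 fun r ↦ ?_⟩
  have hsucc : Tendsto (fun k ↦ e (k + 1)) atTop atTop :=
    e.strictMono.tendsto_atTop.comp (tendsto_add_atTop_nat 1)
  filter_upwards [hsucc.eventually (hX ⌈r⌉₊), e.strictMono.tendsto_atTop.eventually_gt_atTop 0]
    with k hgap hpos
  have hmul : (⌈r⌉₊ : ℝ) * e k ≤ e (k + 1) :=
    mod_cast hgap (heX _) (e k) (heX k) (e.strictMono k.lt_add_one)
  exact (Nat.le_ceil r).trans ((le_div_iff₀ (by exact_mod_cast hpos)).2 hmul)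

end SuperLacunary

section DyadicFloor

/-- The map `n ↦ ⌊θ 2^n⌋` along which `η` is pushed forward. -/
def dyadicFloor (θ : ℝ) (n : ℕ) : ℕ :=
  ⌊θ * 2 ^ n⌋₊

variable {θ : ℝ}

lemma two_pow_mul_dyadicFloor_le (hθ : 0 ≤ θ) (m d : ℕ) :
    2 ^ d * dyadicFloor θ m ≤ dyadicFloor θ (m + d) := by
  refine Nat.le_floor ?_
  calc ((2 ^ d * dyadicFloor θ m : ℕ) : ℝ) = 2 ^ d * dyadicFloor θ m := by push_cast; rfl
    _ ≤ 2 ^ d * (θ * 2 ^ m) := by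
        gcongr
        exact Nat.floor_le (by positivity)
    _ = θ * 2 ^ (m + d) := by ring

lemma dyadicFloor_add_lt {m : ℕ} (hm : 0 < dyadicFloor θ m) (d : ℕ) :
    dyadicFloor θ (m + d) < 2 ^ (d + 1) * dyadicFloor θ m := by
  refine (Nat.floor_lt' (by positivity)).2 ?_
  have hone : (1 : ℝ) ≤ dyadicFloor θ m := mod_cast hm
  calc θ * 2 ^ (m + d) = 2 ^ d * (θ * 2 ^ m) := by ring
    _ < 2 ^ d * (dyadicFloor θ m + 1) := by
        gcongr
        exact Nat.lt_floor_add_one _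
    _ ≤ 2 ^ d * (dyadicFloor θ m + dyadicFloor θ m) := by gcongr
    _ = ((2 ^ (d + 1) * dyadicFloor θ m : ℕ) : ℝ) := by push_cast; ring

lemma dyadicFloor_mono (hθ : 0 ≤ θ) : Monotone (dyadicFloor θ) :=
  Nat.floor_mono.comp (monotone_mul_two_pow hθ)

lemma tendsto_dyadicFloor_atTop (hθ : 0 < θ) : Tendsto (dyadicFloor θ) atTop atTop :=
  tendsto_nat_floor_atTop.comp (tendsto_mul_two_pow_atTop hθ)

theorem ThinSet.superLacunary_image_dyadicFloor {A : Set ℕ} (hA : ThinSet A)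
    (hθ : 0 ≤ θ) (hinf : (dyadicFloor θ '' A).Infinite) : SuperLacunary (dyadicFloor θ '' A) := by
  refine superLacunary_of_eventually_mul_le hinf fun c ↦ ?_
  obtain ⟨N, hN⟩ := eventually_atTop.1 (thinSet_iff_eventually_add_le.1 hA c)
  filter_upwards [eventually_gt_atTop (dyadicFloor θ N)]
  rintro _ hNn ⟨n, hn, rfl⟩ _ ⟨m, hm, rfl⟩ hmn
  have hNle : N ≤ n := ((dyadicFloor_mono hθ).reflect_lt hNn).le
  have hgap : m + c ≤ n := hN n hNle hn m hm ((dyadicFloor_mono hθ).reflect_lt hmn)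
  calc c * dyadicFloor θ m ≤ 2 ^ c * dyadicFloor θ m := by
        gcongr
        exact Nat.lt_two_pow_self.le
    _ ≤ dyadicFloor θ (m + c) := two_pow_mul_dyadicFloor_le hθ m c
    _ ≤ dyadicFloor θ n := dyadicFloor_mono hθ hgap

theorem SuperLacunary.thinSet_preimage_dyadicFloor {X : Set ℕ} (hX : SuperLacunary X)
    (hθ : 0 < θ) : ThinSet (dyadicFloor θ ⁻¹' X) := by
  intro d hd
  have hf := tendsto_dyadicFloor_atTop hθ
  obtain ⟨N, hN⟩ := eventually_atTop.1
    ((hf.eventually (hX.eventually_mul_le (2 ^ (d + 1)))).and (hf.eventually_gt_atTop 0))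
  refine (Set.finite_Iio (N + d)).subset ?_
  rintro _ ⟨hn, m, hm, rfl⟩
  refine Set.mem_Iio.2 (lt_of_not_ge fun (hNm : N + d ≤ m + d) ↦ ?_)
  have hpos : 0 < dyadicFloor θ m := (hN m (by omega)).2
  have hlt : dyadicFloor θ m < dyadicFloor θ (m + d) :=
    calc dyadicFloor θ m < 2 ^ d * dyadicFloor θ m :=
          lt_mul_of_one_lt_left hpos (Nat.one_lt_two_pow (by omega))
      _ ≤ dyadicFloor θ (m + d) := two_pow_mul_dyadicFloor_le hθ.le m d
  exact ((hN (m + d) (by omega)).1 hn _ hm hlt).not_gt (dyadicFloor_add_lt hpos d)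

theorem exists_superLacunary_mem_map_iff {η : Ultrafilter ℕ} (hη : (η : Filter ℕ) ≤ atTop)
    (hθ : 0 < θ) :
    (∃ X ∈ η.map (dyadicFloor θ), SuperLacunary X) ↔ ∃ A ∈ η, ThinSet A := by
  constructor
  · rintro ⟨X, hXη, hX⟩
    exact ⟨_, hXη, hX.thinSet_preimage_dyadicFloor hθ⟩
  · rintro ⟨A, hAη, hA⟩
    have hmem : dyadicFloor θ '' A ∈ η.map (dyadicFloor θ) := image_mem_map hAη
    have hfree : map (dyadicFloor θ) η ≤ atTop := (tendsto_dyadicFloor_atTop hθ).mono_left hη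
    have hfreq : ∃ᶠ b in map (dyadicFloor θ) η, b ∈ dyadicFloor θ '' A :=
      (eventually_mem_set.2 hmem).frequently
    have hinf : (dyadicFloor θ '' A).Infinite :=
      Nat.frequently_atTop_iff_infinite.1 (hfreq.filter_mono hfree)
    exact ⟨_, hmem, hA.superLacunary_image_dyadicFloor hθ.le hinf⟩

end DyadicFloor

theorem stmt18_general (η : Ultrafilter ℕ) (hη : (η : Filter ℕ) ≤ Filter.cofinite) (t : ℝ) :
    List.TFAE [
      AddProp (nuDen η t) ∧ ∃ X ∈ η.map (dyadicFloor (2 ^ t)), SuperLacunary X,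
      ∃ X ∈ η.map (dyadicFloor (2 ^ t)), SuperLacunary X,
      ∃ A ∈ η, ThinSet A] := by
  have hη' : (η : Filter ℕ) ≤ atTop := Nat.cofinite_eq_atTop ▸ hη
  have hθ : 0 < (2 : ℝ) ^ t := by positivity
  have hiff := exists_superLacunary_mem_map_iff hη' hθ
  tfae_have 1 → 2 := And.right
  tfae_have 2 → 3 := hiff.1
  tfae_have 3 → 1 := by
    rintro ⟨A, hAη, hA⟩
    exact ⟨hA.addProp_densityAlong hη' hAη hθ, hiff.2 ⟨A, hAη, hA⟩⟩
  tfae_finish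

/-- For a free ultrafilter `η` on `ℕ`, `t ∈ [0,1)`, `θ = 2^t` and `𝒰`
the image of `η` under `n ↦ ⌊θ·2^n⌋`: the measure `ν_{(η,t)}` has the additive property
and `𝒰` contains an infinite set whose increasing enumeration `m_1 < m_2 < ⋯` satisfies
`m_{k+1}/m_k → ∞`, if and only if `η` contains a thin set. -/
theorem stmt18 (η : Ultrafilter ℕ) (hη : (η : Filter ℕ) ≤ Filter.cofinite)
    (t : ℝ) (ht : t ∈ Set.Ico (0:ℝ) 1) :
    (AddProp (nuDen η t) ∧
      ∃ X ∈ Ultrafilter.map (fun n : ℕ => ⌊(2:ℝ) ^ t * 2 ^ n⌋₊) η,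
        ∃ e : ℕ → ℕ, StrictMono e ∧ Set.range e = X ∧
          Tendsto (fun k => (e (k + 1) : ℝ) / (e k : ℝ)) atTop atTop) ↔
    ∃ A ∈ η, ThinSet A :=
  (stmt18_general η hη t).out 0 2
end
end

section
/- There exists a free ultrafilter η on ℕ such that (i) some X ∈ η satisfies X+m ∉ η for every integer m ≥ 1, and (ii) no thin set belongs to η. (Equivalently, in the dynamical system (ℕ*, τ) on the Stone–Čech remainder, the set of wandering points is a proper subset of the set of points that do not return to any neighborhood of themselves under negative iteration: 𝒲_d ⊊ 𝒟_d.) -/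
open Filter

/-!
In the semigroup `(βℕ, +)`, a sum `U + V` of two free ultrafilters contains no thin set: if
`A ∈ U + V`, there are `i < j` with `i + n ∈ A` and `j + n ∈ A` for `V`-almost all `n`, and then
`A ∩ (A + (j - i))` is infinite. If moreover `U` and `V` contain a set `S` in which every element is
at least twice any smaller one, then the set `X` of sums `a + b` with `a < b` in `S` belongs to
`U + V`, while an element `a + b` of `X` can lie in `X + m` only if `a ≤ 2 * m`; since `U` is free,
`X + m ∉ U + V` for all `m ≥ 1`. The powers of two form such a set `S`.
-/

attribute [local instance] Ultrafilter.add

section FreeSums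

variable {A S : Set ℕ} {U V : Ultrafilter ℕ}

theorem thinSet_of_finite (hA : A.Finite) : ThinSet A :=
  fun _ _ => hA.subset Set.inter_subset_left

theorem le_cofinite_of_forall_not_thinSet (hU : ∀ A ∈ U, ¬ ThinSet A) : (U : Filter ℕ) ≤ cofinite :=
  fun _ hA => Ultrafilter.compl_notMem_iff.1 fun h => hU _ h (thinSet_of_finite hA)

theorem ThinSet.finite_setOf_add_mem (hA : ThinSet A) {i j : ℕ} (hij : i < j) :
    {n | i + n ∈ A ∧ j + n ∈ A}.Finite := by
  refine ((hA (j - i) (by lia)).preimage (add_right_injective j).injOn).subset ?_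
  rintro n ⟨hi, hj⟩
  exact ⟨hj, i + n, hi, by lia⟩

theorem ThinSet.notMem_add (hA : ThinSet A) (hU : (U : Filter ℕ) ≤ cofinite)
    (hV : (V : Filter ℕ) ≤ cofinite) : A ∉ U + V := by
  intro hmem
  have hUV : ∀ᶠ i in U, ∀ᶠ n in V, i + n ∈ A := (Ultrafilter.eventually_add U V (· ∈ A)).1 hmem
  rw [Nat.cofinite_eq_atTop] at hU
  obtain ⟨i, hi⟩ := hUV.exists
  obtain ⟨j, hj, hij⟩ := (hUV.and (hU (eventually_gt_atTop i))).exists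
  obtain ⟨n, hn, hnotMem⟩ :=
    ((hi.and hj).and (hV (hA.finite_setOf_add_mem hij).compl_mem_cofinite)).exists
  exact hnotMem hn

/-- `S ⊆ ℕ` is lacunary, here with ratio at least two: every element is at least twice any smaller
one. This makes the gaps below the sums in `pairSums S` large. -/
def IsLacunary (S : Set ℕ) : Prop :=
  ∀ ⦃a⦄, a ∈ S → ∀ ⦃b⦄, b ∈ S → a < b → 2 * a ≤ b

theorem isLacunary_range_two_pow : IsLacunary (Set.range (2 ^ · : ℕ → ℕ)) := by
  rintro _ ⟨i, rfl⟩ _ ⟨j, rfl⟩ hij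
  have hlt : i < j := (Nat.pow_lt_pow_iff_right one_lt_two).1 hij
  calc 2 * 2 ^ i = 2 ^ (i + 1) := (pow_succ' 2 i).symm
    _ ≤ 2 ^ j := Nat.pow_le_pow_right two_pos hlt

/-- The set of sums of two distinct elements of `S`: for `S` lacunary, the witness `X` for (i). The
smaller summand comes first, as the `U`-limit is outermost in `U + V`. -/
def pairSums (S : Set ℕ) : Set ℕ :=
  {x | ∃ a ∈ S, ∃ b ∈ S, a < b ∧ a + b = x}

theorem IsLacunary.le_two_mul_of_add_mem_image (hS : IsLacunary S) {a b m : ℕ} (ha : a ∈ S)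
    (hb : b ∈ S) (hab : a < b) (hm : 1 ≤ m) (h : a + b ∈ (fun x => x + m) '' pairSums S) :
    a ≤ 2 * m := by
  obtain ⟨_, ⟨c, hc, d, hd, hcd, rfl⟩, heq : c + d + m = a + b⟩ := h
  rcases lt_trichotomy d b with hdb | rfl | hbd
  · have := hS hd hb hdb
    lia
  · have := hS hc ha (by lia)
    lia
  · have := hS hb hd hbd
    lia

theorem pairSums_mem_add (hSU : S ∈ U) (hSV : S ∈ V) (hV : (V : Filter ℕ) ≤ cofinite) :
    pairSums S ∈ U + V := by
  rw [Nat.cofinite_eq_atTop] at hV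
  refine (Ultrafilter.eventually_add U V (· ∈ pairSums S)).2 ?_
  filter_upwards [hSU] with a ha
  filter_upwards [hSV, hV (eventually_gt_atTop a)] with b hb hab
  exact ⟨a, ha, b, hb, hab, rfl⟩

theorem IsLacunary.image_pairSums_notMem_add (hS : IsLacunary S) (hSU : S ∈ U) (hSV : S ∈ V)
    (hU : (U : Filter ℕ) ≤ cofinite) (hV : (V : Filter ℕ) ≤ cofinite) {m : ℕ} (hm : 1 ≤ m) :
    (fun x => x + m) '' pairSums S ∉ U + V := by
  rw [Nat.cofinite_eq_atTop] at hU hV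
  refine Ultrafilter.compl_mem_iff_notMem.1
    ((Ultrafilter.eventually_add U V (· ∉ (fun x => x + m) '' pairSums S)).2 ?_)
  filter_upwards [hSU, hU (eventually_gt_atTop (2 * m))] with a ha hma
  filter_upwards [hSV, hV (eventually_gt_atTop a)] with b hb hab hmem
  exact hma.not_ge (hS.le_two_mul_of_add_mem_image ha hb hab hm hmem)

end FreeSums

/-- There is a free ultrafilter `η` on `ℕ` such that (i) some `X ∈ η`
satisfies `X + m ∉ η` for all `m ≥ 1` (the corresponding point of `ℕ*` lies in `𝒟_d`),
and (ii) no thin set belongs to `η` (the point is not wandering); i.e. `𝒲_d ⊊ 𝒟_d`. -/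
theorem stmt19 :
    ∃ η : Ultrafilter ℕ, (η : Filter ℕ) ≤ Filter.cofinite ∧
      (∃ X ∈ η, ∀ m : ℕ, 1 ≤ m → (fun x => x + m) '' X ∉ η) ∧
      (∀ A ∈ η, ¬ ThinSet A) := by
  let S : Set ℕ := Set.range (2 ^ · : ℕ → ℕ)
  let U : Ultrafilter ℕ := (hyperfilter ℕ).map (2 ^ ·)
  have hU : (U : Filter ℕ) ≤ cofinite :=
    (Nat.pow_right_injective le_rfl).tendsto_cofinite.mono_left hyperfilter_le_cofinite
  have hSU : S ∈ U := range_mem_map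
  have hthin : ∀ A ∈ U + U, ¬ ThinSet A := fun A hmem hA => hA.notMem_add hU hU hmem
  exact ⟨U + U, le_cofinite_of_forall_not_thinSet hthin,
    ⟨pairSums S, pairSums_mem_add hSU hSU hU,
      fun m hm => isLacunary_range_two_pow.image_pairSums_notMem_add hSU hSU hU hU hm⟩,
    hthin⟩
end
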